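/- Let n ≥ 2 and let ℓ₁, …, ℓₙ be strictly positive real numbers. Fix an index i with 1 ≤ i ≤ n − 1, let Rᵢ denote the sublist (ℓ_{i+1}, …, ℓₙ), and set Pᵢ = ∑_{j=i+1}^{n} ℓⱼ. Define the modified list L′ = (ℓ′, …, ℓ′, ℓ_{i+1}, …, ℓₙ), in which the first i entries of L are all replaced by the single value ℓ′ = Pᵢ / exp(E(Rᵢ)). Then the persistence entropies satisfy E(L) ≤ E(L′). -/

import Mathlib

/-- The persistence entropy of a finite list of bar lengths:
`E(L) = -∑ⱼ pⱼ log pⱼ` where `pⱼ = ℓⱼ / S_L` and `S_L = ∑ⱼ ℓⱼ`. -/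
noncomputable def persistenceEntropy (L : List ℝ) : ℝ :=
  -(L.map (fun x => x / L.sum * Real.log (x / L.sum))).sum

/-!
The quantity `exp (E L)` behaves like an effective number of bars. It is `1` for a single bar, and
by Gibbs' inequality it is subadditive under concatenation. Adding the first `i` bars of `L` one at
a time to the remaining list `R` therefore gives `exp (E L) ≤ i + exp (E R)`. The value
`a = R.sum / exp (E R)` is the length for which this is an equality: as far as `∑ ℓⱼ` and
`∑ ℓⱼ log ℓⱼ` are concerned, `R` looks like `exp (E R)` bars of length `a`, so `i` further bars
of length `a` behave like `i + exp (E R)` equal bars.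
-/

section

open Real

theorem persistenceEntropy_eq_sum_negMulLog (L : List ℝ) :
    persistenceEntropy L = (L.map fun x => negMulLog (x / L.sum)).sum := by
  simp only [persistenceEntropy, negMulLog_eq_neg, List.sum_neg, List.map_map, Function.comp_def]

-- Here every `ℓⱼ / S_L` takes the junk value `x / 0 = 0`.
theorem persistenceEntropy_of_sum_eq_zero {L : List ℝ} (hL : L.sum = 0) :
    persistenceEntropy L = 0 := by
  simp [persistenceEntropy, hL]

theorem persistenceEntropy_singleton (x : ℝ) : persistenceEntropy [x] = 0 := by
  rcases eq_or_ne x 0 with rfl | hx <;> simp [persistenceEntropy, *]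

theorem sum_map_negMulLog_of_sum_ne_zero {L : List ℝ} (hL : L.sum ≠ 0) :
    (L.map negMulLog).sum = negMulLog L.sum + L.sum * persistenceEntropy L := by
  have hterm (x : ℝ) :
      negMulLog x = x * (negMulLog L.sum / L.sum) + L.sum * negMulLog (x / L.sum) := by
    calc negMulLog x = negMulLog (L.sum * (x / L.sum)) := by rw [mul_div_cancel₀ x hL]
      _ = x * (negMulLog L.sum / L.sum) + L.sum * negMulLog (x / L.sum) := by
        rw [negMulLog_mul]; ring
  calc (L.map negMulLog).sum
      = (L.map fun x => x * (negMulLog L.sum / L.sum) + L.sum * negMulLog (x / L.sum)).sum := by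
        simp only [← hterm]
    _ = L.sum * (negMulLog L.sum / L.sum) + L.sum * persistenceEntropy L := by
        rw [List.sum_map_add, List.sum_map_mul_right, List.sum_map_mul_left, List.map_id',
          persistenceEntropy_eq_sum_negMulLog]
    _ = negMulLog L.sum + L.sum * persistenceEntropy L := by rw [mul_div_cancel₀ _ hL]

theorem sum_map_negMulLog_of_nonneg {L : List ℝ} (hL : ∀ x ∈ L, 0 ≤ x) :
    (L.map negMulLog).sum = negMulLog L.sum + L.sum * persistenceEntropy L := by
  rcases eq_or_ne L.sum 0 with hsum | hsum
  · have hzero : ∀ x ∈ L, x = 0 := fun _ =>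
      List.all_zero_of_le_zero_le_of_sum_eq_zero hL hsum
    have hmap : (L.map negMulLog).sum = 0 := by
      refine List.sum_eq_zero (List.forall_mem_map.2 fun x hx => ?_)
      rw [hzero x hx, negMulLog_zero]
    rw [hmap, hsum, negMulLog_zero, zero_mul, add_zero]
  · exact sum_map_negMulLog_of_sum_ne_zero hsum

theorem negMulLog_add_mul_log_le_sub {x y : ℝ} (hx : 0 ≤ x) (hy : 0 < y) :
    negMulLog x + x * log y ≤ y - x := by
  calc negMulLog x + x * log y = negMulLog (y * (x / y)) + x * log y := by
        rw [mul_div_cancel₀ x hy.ne']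
    _ = y * negMulLog (x / y) := by
        rw [negMulLog_mul, negMulLog]; field_simp; ring
    _ ≤ y * (1 - x / y) := by gcongr; exact negMulLog_le_one_sub_self (by positivity)
    _ = y - x := by field_simp

theorem negMulLog_add_negMulLog_le {a b u v : ℝ} (ha : 0 ≤ a) (hb : 0 ≤ b)
    (hu : 0 < u) (hv : 0 < v) :
    negMulLog a + a * log u + (negMulLog b + b * log v) ≤
      negMulLog (a + b) + (a + b) * log (u + v) := by
  rcases (add_nonneg ha hb).eq_or_lt with hab | hab
  · obtain ⟨rfl, rfl⟩ := (add_eq_zero_iff_of_nonneg ha hb).1 hab.symm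
    simp
  -- The tangent-line bound is sharp when `a : b = u : v`, so compare with that split of `a + b`.
  set t := (a + b) / (u + v) with ht_def
  have ht : 0 < t := by positivity
  have hlog : log t = log (a + b) - log (u + v) := log_div hab.ne' (by positivity)
  have hsplit : u * t + v * t = a + b := by rw [ht_def]; field_simp
  have hau := negMulLog_add_mul_log_le_sub ha (mul_pos hu ht)
  have hbv := negMulLog_add_mul_log_le_sub hb (mul_pos hv ht)
  rw [log_mul hu.ne' ht.ne', hlog] at hau
  rw [log_mul hv.ne' ht.ne', hlog] at hbv
  simp only [negMulLog_eq_neg] at hau hbv ⊢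
  linarith

theorem exp_persistenceEntropy_append_le {K R : List ℝ} (hK : ∀ x ∈ K, 0 ≤ x)
    (hR : ∀ x ∈ R, 0 ≤ x) :
    exp (persistenceEntropy (K ++ R)) ≤
      exp (persistenceEntropy K) + exp (persistenceEntropy R) := by
  have hKsum : 0 ≤ K.sum := List.sum_nonneg hK
  have hRsum : 0 ≤ R.sum := List.sum_nonneg hR
  have hsum : (K ++ R).sum = K.sum + R.sum := List.sum_append
  rcases (add_nonneg hKsum hRsum).eq_or_lt with hzero | hpos
  · rw [persistenceEntropy_of_sum_eq_zero (hsum.trans hzero.symm),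
      persistenceEntropy_of_sum_eq_zero ((add_eq_zero_iff_of_nonneg hKsum hRsum).1 hzero.symm).1]
    exact le_add_of_nonneg_right (exp_pos _).le
  rw [← le_log_iff_exp_le (by positivity)]
  refine le_of_mul_le_mul_left ?_ hpos
  have hgroup := sum_map_negMulLog_of_nonneg (List.forall_mem_append.2 ⟨hK, hR⟩)
  rw [List.map_append, List.sum_append, sum_map_negMulLog_of_nonneg hK,
    sum_map_negMulLog_of_nonneg hR, hsum] at hgroup
  have hlogsum := negMulLog_add_negMulLog_le hKsum hRsum
    (exp_pos (persistenceEntropy K)) (exp_pos (persistenceEntropy R))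
  rw [log_exp, log_exp] at hlogsum
  linarith

theorem exp_persistenceEntropy_append_le_length_add {K R : List ℝ} (hK : ∀ x ∈ K, 0 ≤ x)
    (hR : ∀ x ∈ R, 0 ≤ x) :
    exp (persistenceEntropy (K ++ R)) ≤ K.length + exp (persistenceEntropy R) := by
  induction K with
  | nil => simp
  | cons x K ih =>
    obtain ⟨hx, hK⟩ := List.forall_mem_cons.1 hK
    calc exp (persistenceEntropy ([x] ++ (K ++ R)))
        ≤ exp (persistenceEntropy [x]) + exp (persistenceEntropy (K ++ R)) :=
          exp_persistenceEntropy_append_le (List.forall_mem_singleton.2 hx)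
            (List.forall_mem_append.2 ⟨hK, hR⟩)
      _ ≤ 1 + (K.length + exp (persistenceEntropy R)) := by
          rw [persistenceEntropy_singleton, exp_zero]
          gcongr
          exact ih hK
      _ = (x :: K).length + exp (persistenceEntropy R) := by
          rw [List.length_cons]; push_cast; ring

theorem exp_persistenceEntropy_replicate_append (k : ℕ) {R : List ℝ} (hR : R.sum ≠ 0) :
    exp (persistenceEntropy (List.replicate k (R.sum / exp (persistenceEntropy R)) ++ R)) =
      k + exp (persistenceEntropy R) := by
  set a := R.sum / exp (persistenceEntropy R)
  set z := k + exp (persistenceEntropy R)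
  have hz : 0 < z := by positivity
  have ha : a ≠ 0 := div_ne_zero hR (exp_ne_zero _)
  have hRsum : R.sum = a * exp (persistenceEntropy R) := (div_mul_cancel₀ _ (exp_ne_zero _)).symm
  have hsum : (List.replicate k a ++ R).sum = a * z := by
    rw [List.sum_append, List.sum_replicate, nsmul_eq_mul, hRsum]; ring
  have hR_map : (R.map negMulLog).sum = exp (persistenceEntropy R) * negMulLog a := by
    rw [sum_map_negMulLog_of_sum_ne_zero hR, hRsum, negMulLog_mul, negMulLog, negMulLog, log_exp]
    ring
  have hmap : ((List.replicate k a ++ R).map negMulLog).sum = z * negMulLog a := by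
    rw [List.map_append, List.sum_append, List.map_replicate, List.sum_replicate, nsmul_eq_mul,
      hR_map]
    ring
  have hentropy : a * z * persistenceEntropy (List.replicate k a ++ R) = a * z * log z := by
    have h := sum_map_negMulLog_of_sum_ne_zero (hsum ▸ mul_ne_zero ha hz.ne')
    rw [hmap, hsum, negMulLog_mul, negMulLog, negMulLog] at h
    linarith
  rw [mul_left_cancel₀ (mul_ne_zero ha hz.ne') hentropy, exp_log hz]

-- A bar of length `0` contributes `0 * log 0 = 0`, the usual convention for entropy.
theorem entropy_le_entropy_modified_general {L : List ℝ} (hL : ∀ x ∈ L, 0 ≤ x) {i : ℕ}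
    (hi : (L.drop i).sum ≠ 0) :
    persistenceEntropy L ≤
      persistenceEntropy
        (List.replicate i ((L.drop i).sum / exp (persistenceEntropy (L.drop i))) ++ L.drop i) := by
  rw [← exp_le_exp, exp_persistenceEntropy_replicate_append i hi]
  calc exp (persistenceEntropy L)
      = exp (persistenceEntropy (L.take i ++ L.drop i)) := by rw [List.take_append_drop]
    _ ≤ (L.take i).length + exp (persistenceEntropy (L.drop i)) :=
        exp_persistenceEntropy_append_le_length_add
          (fun x hx => hL x (List.mem_of_mem_take hx)) (fun x hx => hL x (List.mem_of_mem_drop hx))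
    _ ≤ i + exp (persistenceEntropy (L.drop i)) := by
        gcongr
        exact List.length_take_le i L

end

/-- Replacing the first `i` bars by the single value `Pᵢ / exp(E(Rᵢ))`, where
`Rᵢ` is the tail of the list and `Pᵢ` its total length, does not decrease the
persistence entropy. -/
theorem entropy_le_entropy_modified (n : ℕ) (hn : 2 ≤ n) (L : List ℝ)
    (hlen : L.length = n) (hpos : ∀ x ∈ L, 0 < x)
    (i : ℕ) (hi1 : 1 ≤ i) (hi2 : i ≤ n - 1) :
    persistenceEntropy L ≤
      persistenceEntropy
        (List.replicate i ((L.drop i).sum / Real.exp (persistenceEntropy (L.drop i)))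
          ++ L.drop i) := by
  have htail : L.drop i ≠ [] := List.drop_eq_nil_iff.not.2 (by omega)
  exact entropy_le_entropy_modified_general (fun x hx => (hpos x hx).le)
    (List.sum_pos _ (fun x hx => hpos x (List.mem_of_mem_drop hx)) htail).ne'
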